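/- For every q ∈ ℍ the kernel k_q(p) = Σ_{n=0}^∞ pⁿ q̄ⁿ / n! belongs to the slice hyperholomorphic quaternionic Fock space; more precisely, for every imaginary unit I ∈ 𝕊, (1/π) ∫_{ℝ²} e^{−(x²+y²)} |k_q(x+yI)|² \,dx\,dy = Σ_{n=0}^∞ |q|^{2n}/n! = e^{|q|²} < ∞. -/

import Mathlib

open MeasureTheory Real Nat

noncomputable section

local notation "ℍ" => Quaternion ℝ

/-- The sphere of quaternionic imaginary units. -/
def quatSphere : Set ℍ := {q | q.re = 0 ∧ ‖q‖ = 1}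

/-- The point `x + y I` of the slice `ℂ_I`. -/
def sliceVal (I : ℍ) (z : ℝ × ℝ) : ℍ := ((z.1 : ℍ)) + ((z.2 : ℍ)) * I

/-- The squared Fock norm of `f` on the slice `ℂ_I`, with values in `[0,∞]`. -/
def fockNormSq (I : ℍ) (f : ℍ → ℍ) : ENNReal :=
  ENNReal.ofReal π⁻¹ *
    ∫⁻ z : ℝ × ℝ, ENNReal.ofReal (Real.exp (-(z.1 ^ 2 + z.2 ^ 2)) * ‖f (sliceVal I z)‖ ^ 2)

/-- The reproducing kernel `k_q(p) = e_⋆^{p q̄} = Σ pⁿ q̄ⁿ / n!`. -/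
def fockKernel (q : ℍ) : ℍ → ℍ := fun p => ∑' n : ℕ, ((n ! : ℝ)⁻¹) • (p ^ n * (star q) ^ n)

/-!
In polar coordinates on the slice `ℂ_I`, identified with `ℂ`, a power series `∑ pⁿ aₙ` restricts
to the circle of radius `r` as `∑ rⁿ e^{Inθ} aₙ`. The monomials `e^{Inθ} aₙ` with different `n` are
orthogonal, because `⟪e^{Imθ} a, e^{Inθ} b⟫ = ⟪a, e^{I(n-m)θ} b⟫` is real-linear in `e^{i(n-m)θ}`,
so the circle contributes `2π ∑ r²ⁿ |aₙ|²`. Integrating against `r e^{-r²}` turns `r²ⁿ` into `n!/2`,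
which gives the squared Fock norm `∑ n! |aₙ|²`. For the kernel, `aₙ = q̄ⁿ / n!`.
-/

open scoped InnerProductSpace ComplexConjugate

section Orthogonality

variable {ι α E : Type*} [Countable ι] [MeasurableSpace α] {μ : Measure α}
  [NormedAddCommGroup E] [CompleteSpace E] {f : ι → α → E} {u : ι → ℝ}

theorem aestronglyMeasurable_tsum_of_norm_le (hu : Summable u)
    (hf : ∀ i, AEStronglyMeasurable (f i) μ) (hfu : ∀ i x, ‖f i x‖ ≤ u i) :
    AEStronglyMeasurable (fun x => ∑' i, f i x) μ :=
  aestronglyMeasurable_of_tendsto_ae Filter.atTop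
    (fun s => Finset.aestronglyMeasurable_fun_sum s fun i _ => hf i)
    (.of_forall fun x => (hu.of_norm_bounded fun i => hfu i x).hasSum)

variable [IsFiniteMeasure μ] [InnerProductSpace ℝ E]

theorem hasSum_integral_inner_tsum {g : α → E} {C : ℝ} (hg : AEStronglyMeasurable g μ)
    (hgC : ∀ x, ‖g x‖ ≤ C) (hu : Summable u) (hf : ∀ i, AEStronglyMeasurable (f i) μ)
    (hfu : ∀ i x, ‖f i x‖ ≤ u i) :
    HasSum (fun i => ∫ x, ⟪g x, f i x⟫_ℝ ∂μ) (∫ x, ⟪g x, ∑' i, f i x⟫_ℝ ∂μ) := by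
  have inner_le (i : ι) (x : α) : ‖⟪g x, f i x⟫_ℝ‖ ≤ C * u i :=
    (norm_inner_le_norm _ _).trans <|
      mul_le_mul (hgC x) (hfu i x) (norm_nonneg _) ((norm_nonneg _).trans (hgC x))
  have inner_tsum (x : α) : ⟪g x, ∑' i, f i x⟫_ℝ = ∑' i, ⟪g x, f i x⟫_ℝ :=
    (innerSL ℝ (g x)).map_tsum (hu.of_norm_bounded fun i => hfu i x)
  simp_rw [inner_tsum]
  refine hasSum_integral_of_summable_integral_norm
    (fun i => .of_bound (hg.inner (hf i)) (C * u i) (.of_forall (inner_le i)))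
    (.of_norm_bounded ((hu.mul_left C).mul_left (μ.real Set.univ)) fun i => ?_)
  rw [mul_comm]
  exact norm_integral_le_of_norm_le_const (.of_forall fun x => by simpa using inner_le i x)

theorem hasSum_integral_norm_sq_of_pairwise_orthogonal (hu : Summable u)
    (hf : ∀ i, AEStronglyMeasurable (f i) μ) (hfu : ∀ i x, ‖f i x‖ ≤ u i)
    (horth : Pairwise fun i j => ∫ x, ⟪f i x, f j x⟫_ℝ ∂μ = 0) :
    HasSum (fun i => ∫ x, ‖f i x‖ ^ 2 ∂μ) (∫ x, ‖∑' i, f i x‖ ^ 2 ∂μ) := by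
  have inner_sum (i : ι) : ∫ x, ⟪f i x, ∑' j, f j x⟫_ℝ ∂μ = ∫ x, ‖f i x‖ ^ 2 ∂μ := by
    have diagonal := hasSum_single i fun j hj => horth (Ne.symm hj)
    simp_rw [real_inner_self_eq_norm_sq] at diagonal
    exact (hasSum_integral_inner_tsum (hf i) (hfu i) hu hf hfu).unique diagonal
  have sum_inner := hasSum_integral_inner_tsum (aestronglyMeasurable_tsum_of_norm_le hu hf hfu)
    (fun x => tsum_of_norm_bounded hu.hasSum (hfu · x)) hu hf hfu
  simpa only [real_inner_comm, inner_sum, real_inner_self_eq_norm_sq] using sum_inner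

theorem lintegral_norm_sq_tsum_of_pairwise_orthogonal (hu : Summable u)
    (hf : ∀ i, AEStronglyMeasurable (f i) μ) (hfu : ∀ i x, ‖f i x‖ ≤ u i)
    (horth : Pairwise fun i j => ∫ x, ⟪f i x, f j x⟫_ℝ ∂μ = 0) :
    ∫⁻ x, ENNReal.ofReal (‖∑' i, f i x‖ ^ 2) ∂μ =
      ∑' i, ∫⁻ x, ENNReal.ofReal (‖f i x‖ ^ 2) ∂μ := by
  have sq_integrable {g : α → E} {C : ℝ} (hg : AEStronglyMeasurable g μ)
      (hgC : ∀ x, ‖g x‖ ≤ C) : Integrable (fun x => ‖g x‖ ^ 2) μ :=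
    .of_bound (hg.norm.pow 2) (C ^ 2) (.of_forall fun x => by simpa using by gcongr; exact hgC x)
  have parseval := hasSum_integral_norm_sq_of_pairwise_orthogonal hu hf hfu horth
  rw [← ofReal_integral_eq_lintegral_ofReal
      (sq_integrable (aestronglyMeasurable_tsum_of_norm_le hu hf hfu)
        fun x => tsum_of_norm_bounded hu.hasSum (hfu · x)) (.of_forall fun x => by positivity),
    ← parseval.tsum_eq, ENNReal.ofReal_tsum_of_nonneg (fun i => by positivity) parseval.summable]
  exact tsum_congr fun i => ofReal_integral_eq_lintegral_ofReal (sq_integrable (hf i) (hfu i))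
    (.of_forall fun x => by positivity)

end Orthogonality

theorem setIntegral_circleMap_zero_int_mul {k : ℤ} (hk : k ≠ 0) (R : ℝ) :
    ∫ θ in Set.Ioo (-π) π, circleMap 0 R (k * θ) = 0 := by
  have circleMap_eq (θ : ℝ) : circleMap 0 R (k * θ) = R * Complex.exp (k * Complex.I * θ) := by
    rw [circleMap_zero, Complex.ofReal_mul, Complex.ofReal_intCast, mul_right_comm]
  have exp_eq : Complex.exp (k * Complex.I * π) = Complex.exp (k * Complex.I * (-π : ℝ)) :=
    Complex.exp_eq_exp_iff_exists_int.mpr ⟨k, by push_cast; ring⟩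
  simp_rw [circleMap_eq]
  rw [integral_const_mul, ← integral_Ioc_eq_integral_Ioo,
    ← intervalIntegral.integral_of_le (by linarith [pi_pos]),
    integral_exp_mul_complex (by simp [hk]), exp_eq, sub_self, zero_div, mul_zero]

theorem conj_circleMap_zero_pow_mul_pow (r θ : ℝ) (m n : ℕ) :
    conj (circleMap 0 r θ ^ m) * circleMap 0 r θ ^ n =
      circleMap 0 (r ^ (m + n)) ((n - m : ℤ) * θ) := by
  rw [map_pow, conj_circleMap_zero, circleMap_zero_pow, circleMap_zero_pow, circleMap_zero_mul,
    ← pow_add]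
  congr 1
  push_cast
  ring

theorem lintegral_Ioi_pow_mul_exp_neg_sq (n : ℕ) :
    ∫⁻ r in Set.Ioi (0 : ℝ), ENNReal.ofReal (r ^ (2 * n + 1) * Real.exp (-r ^ 2)) =
      ENNReal.ofReal (n ! / 2) := by
  have exponent_gt : (-1 : ℝ) < (2 * n + 1 : ℕ) := neg_one_lt_zero.trans_le (Nat.cast_nonneg _)
  have integrable := integrableOn_rpow_mul_exp_neg_rpow exponent_gt two_pos
  have moment := integral_rpow_mul_exp_neg_rpow two_pos exponent_gt
  have gamma_arg : ((2 * n + 1 : ℕ) + 1 : ℝ) / 2 = n + 1 := by push_cast; ring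
  rw [gamma_arg, Gamma_nat_eq_factorial, one_div_mul_eq_div] at moment
  simp_rw [rpow_natCast, rpow_two] at integrable moment
  rw [← moment, ofReal_integral_eq_lintegral_ofReal integrable]
  exact ae_restrict_of_forall_mem measurableSet_Ioi fun r (hr : 0 < r) => by positivity

theorem inner_mul_left_quaternion (p a b : ℍ) : ⟪p * a, b⟫_ℝ = ⟪a, star p * b⟫_ℝ := by
  simp only [Quaternion.inner_def, Quaternion.re_mul, Quaternion.imI_mul, Quaternion.imJ_mul,
    Quaternion.imK_mul, Quaternion.re_star, Quaternion.imI_star, Quaternion.imJ_star,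
    Quaternion.imK_star]
  ring

section SliceEmbedding

theorem star_eq_neg_of_mem_quatSphere {I : ℍ} (hI : I ∈ quatSphere) : star I = -I :=
  Quaternion.star_eq_neg.mpr hI.1

theorem mul_self_of_mem_quatSphere {I : ℍ} (hI : I ∈ quatSphere) : I * I = -1 := by
  rw [← sq, Quaternion.sq_eq_neg_normSq.mpr hI.1, Quaternion.normSq_eq_norm_mul_self, hI.2,
    mul_one, Quaternion.coe_one]

/-- The `ℝ`-algebra embedding `ℂ → ℍ`, `x + iy ↦ x + yI`, whose image is the slice `ℂ_I`. -/
def sliceEmbedding {I : ℍ} (hI : I ∈ quatSphere) : ℂ →ₐ[ℝ] ℍ :=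
  Complex.liftAux I (mul_self_of_mem_quatSphere hI)

variable {I : ℍ} (hI : I ∈ quatSphere)

theorem sliceEmbedding_apply (z : ℂ) : sliceEmbedding hI z = sliceVal I (z.re, z.im) := by
  rw [sliceEmbedding, Complex.liftAux_apply, sliceVal, Quaternion.coe_mul_eq_smul,
    Quaternion.algebraMap_def]

theorem star_sliceEmbedding (z : ℂ) : star (sliceEmbedding hI z) = sliceEmbedding hI (conj z) := by
  simp [sliceEmbedding, star_eq_neg_of_mem_quatSphere hI]

theorem norm_sliceEmbedding (z : ℂ) : ‖sliceEmbedding hI z‖ = ‖z‖ := by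
  have norm_mul_self : sliceEmbedding hI z * star (sliceEmbedding hI z) = (‖z‖ ^ 2 : ℝ) := by
    rw [star_sliceEmbedding, ← map_mul, Complex.mul_conj']
    simp
  rw [Quaternion.self_mul_star, Quaternion.coe_inj, Quaternion.normSq_eq_norm_mul_self, ← sq]
    at norm_mul_self
  exact (pow_left_inj₀ (norm_nonneg _) (norm_nonneg _) two_ne_zero).mp norm_mul_self

theorem continuous_sliceEmbedding : Continuous (sliceEmbedding hI) :=
  (sliceEmbedding hI).toLinearMap.continuous_of_finiteDimensional

theorem sliceVal_polarCoord_symm (r θ : ℝ) :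
    sliceVal I (polarCoord.symm (r, θ)) = sliceEmbedding hI (circleMap 0 r θ) := by
  rw [sliceEmbedding_apply, circleMap_zero_re, circleMap_zero_im, polarCoord_symm_apply]

theorem inner_sliceEmbedding_mul (z w : ℂ) (a b : ℍ) :
    ⟪sliceEmbedding hI z * a, sliceEmbedding hI w * b⟫_ℝ =
      ⟪a, sliceEmbedding hI (conj z * w) * b⟫_ℝ := by
  rw [inner_mul_left_quaternion, ← mul_assoc, star_sliceEmbedding, ← map_mul]

theorem setIntegral_inner_sliceEmbedding_circleMap_pow {m n : ℕ} (hmn : m ≠ n) (r : ℝ)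
    (a b : ℍ) :
    ∫ θ in Set.Ioo (-π) π, ⟪sliceEmbedding hI (circleMap 0 r θ) ^ m * a,
      sliceEmbedding hI (circleMap 0 r θ) ^ n * b⟫_ℝ = 0 := by
  let L : ℂ →L[ℝ] ℝ := LinearMap.toContinuousLinearMap
    (innerₗ ℍ a ∘ₗ LinearMap.mulRight ℝ b ∘ₗ (sliceEmbedding hI).toLinearMap)
  have L_apply (z : ℂ) : L z = ⟪a, sliceEmbedding hI z * b⟫_ℝ := rfl
  have integrable : IntegrableOn (fun θ : ℝ => circleMap 0 (r ^ (m + n)) ((n - m : ℤ) * θ))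
      (Set.Ioo (-π) π) :=
    .mono_set (by fun_prop : Continuous _).continuousOn.integrableOn_Icc Set.Ioo_subset_Icc_self
  simp_rw [← map_pow, inner_sliceEmbedding_mul, conj_circleMap_zero_pow_mul_pow, ← L_apply]
  rw [L.integral_comp_comm integrable, setIntegral_circleMap_zero_int_mul (by grind), map_zero]

theorem lintegral_norm_sq_tsum_sliceEmbedding_pow_mul {a : ℕ → ℍ} {r : ℝ}
    (ha : Summable fun n => ‖a n‖ * |r| ^ n) :
    ∫⁻ θ in Set.Ioo (-π) π,
        ENNReal.ofReal (‖∑' n, sliceEmbedding hI (circleMap 0 r θ) ^ n * a n‖ ^ 2) =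
      ∑' n, ENNReal.ofReal (2 * π * ‖a n‖ ^ 2 * r ^ (2 * n)) := by
  have norm_term (n : ℕ) (θ : ℝ) :
      ‖sliceEmbedding hI (circleMap 0 r θ) ^ n * a n‖ = ‖a n‖ * |r| ^ n := by
    rw [norm_mul, norm_pow, norm_sliceEmbedding, norm_circleMap_zero, mul_comm]
  have continuous_term (n : ℕ) :
      Continuous fun θ => sliceEmbedding hI (circleMap 0 r θ) ^ n * a n := by
    have := continuous_sliceEmbedding hI
    fun_prop
  rw [lintegral_norm_sq_tsum_of_pairwise_orthogonal ha
    (fun n => (continuous_term n).aestronglyMeasurable) (fun n θ => (norm_term n θ).le)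
    fun m n hmn => setIntegral_inner_sliceEmbedding_circleMap_pow hI hmn r (a m) (a n)]
  refine tsum_congr fun n => ?_
  simp_rw [norm_term]
  rw [setLIntegral_const, Real.volume_Ioo, ← ENNReal.ofReal_mul (by positivity), mul_pow,
    pow_right_comm, sq_abs, ← pow_mul]
  ring_nf

theorem fockNormSq_eq_lintegral_polar (f : ℍ → ℍ)
    (hf : Measurable fun z => ‖f (sliceVal I z)‖) :
    fockNormSq I f = ENNReal.ofReal π⁻¹ * ∫⁻ r in Set.Ioi (0 : ℝ),
      ENNReal.ofReal (r * Real.exp (-r ^ 2)) *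
        ∫⁻ θ in Set.Ioo (-π) π, ENNReal.ofReal (‖f (sliceEmbedding hI (circleMap 0 r θ))‖ ^ 2) := by
  have polar_measurable : Measurable fun p : ℝ × ℝ => ‖f (sliceVal I (polarCoord.symm p))‖ :=
    hf.comp continuous_polarCoord_symm.measurable
  rw [fockNormSq, ← lintegral_comp_polarCoord_symm, polarCoord_target, Measure.volume_eq_prod,
    setLIntegral_prod _ (by simp only [polarCoord_symm_apply] at polar_measurable ⊢; fun_prop)]
  congr 1
  refine setLIntegral_congr_fun measurableSet_Ioi fun r (hr : 0 < r) => ?_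
  dsimp only
  rw [← lintegral_const_mul' _ _ ENNReal.ofReal_ne_top]
  refine lintegral_congr fun θ => ?_
  have norm_sq : (r * cos θ) ^ 2 + (r * sin θ) ^ 2 = r ^ 2 := by
    linear_combination r ^ 2 * Real.cos_sq_add_sin_sq θ
  rw [sliceVal_polarCoord_symm hI, polarCoord_symm_apply, norm_sq, smul_eq_mul,
    ENNReal.ofReal_mul hr.le, ENNReal.ofReal_mul (Real.exp_nonneg _), mul_assoc]

end SliceEmbedding

theorem measurable_norm_tsum_sliceVal_pow_mul (I : ℍ) {a : ℕ → ℍ}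
    (ha : ∀ r : ℝ, Summable fun n => ‖a n‖ * r ^ n) :
    Measurable fun z => ‖∑' n, sliceVal I z ^ n * a n‖ := by
  have continuous_sliceVal : Continuous (sliceVal I) := by
    have := Quaternion.continuous_coe
    unfold sliceVal
    fun_prop
  have continuous_partialSum (s : Finset ℕ) :
      Continuous fun z => ∑ n ∈ s, sliceVal I z ^ n * a n := by
    fun_prop
  have summable (z : ℝ × ℝ) : Summable fun n => sliceVal I z ^ n * a n :=
    (ha ‖sliceVal I z‖).of_norm_bounded fun n => by rw [norm_mul, norm_pow, mul_comm]
  exact (stronglyMeasurable_of_tendsto Filter.atTop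
    (fun s => (continuous_partialSum s).stronglyMeasurable)
    (tendsto_pi_nhds.mpr fun z => (summable z).hasSum)).norm.measurable

theorem fockNormSq_tsum_pow_mul {I : ℍ} (hI : I ∈ quatSphere) {a : ℕ → ℍ}
    (ha : ∀ r : ℝ, Summable fun n => ‖a n‖ * r ^ n) :
    fockNormSq I (fun p => ∑' n, p ^ n * a n) = ∑' n, ENNReal.ofReal (n ! * ‖a n‖ ^ 2) := by
  have radial_integral (n : ℕ) :
      ∫⁻ r in Set.Ioi (0 : ℝ), ENNReal.ofReal (r * Real.exp (-r ^ 2)) *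
        ENNReal.ofReal (2 * π * ‖a n‖ ^ 2 * r ^ (2 * n)) =
      ENNReal.ofReal (π * (n ! * ‖a n‖ ^ 2)) := by
    calc
      _ = ∫⁻ r in Set.Ioi (0 : ℝ), ENNReal.ofReal (2 * π * ‖a n‖ ^ 2) *
            ENNReal.ofReal (r ^ (2 * n + 1) * Real.exp (-r ^ 2)) := by
        refine setLIntegral_congr_fun measurableSet_Ioi fun r (hr : 0 < r) => ?_
        rw [← ENNReal.ofReal_mul (by positivity), ← ENNReal.ofReal_mul (by positivity)]
        ring_nf
      _ = _ := by
        rw [lintegral_const_mul' _ _ ENNReal.ofReal_ne_top, lintegral_Ioi_pow_mul_exp_neg_sq,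
          ← ENNReal.ofReal_mul (by positivity)]
        ring_nf
  calc fockNormSq I (fun p => ∑' n, p ^ n * a n)
    _ = ENNReal.ofReal π⁻¹ * ∫⁻ r in Set.Ioi (0 : ℝ), ∑' n,
          ENNReal.ofReal (r * Real.exp (-r ^ 2)) *
            ENNReal.ofReal (2 * π * ‖a n‖ ^ 2 * r ^ (2 * n)) := by
      rw [fockNormSq_eq_lintegral_polar hI (fun p => ∑' n, p ^ n * a n)
        (measurable_norm_tsum_sliceVal_pow_mul I ha)]
      simp_rw [fun r => lintegral_norm_sq_tsum_sliceEmbedding_pow_mul hI (ha |r|),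
        ENNReal.tsum_mul_left]
    _ = ENNReal.ofReal π⁻¹ * ∑' n, ENNReal.ofReal (π * (n ! * ‖a n‖ ^ 2)) := by
      rw [lintegral_tsum fun n => by fun_prop]
      simp_rw [radial_integral]
    _ = ∑' n, ENNReal.ofReal (n ! * ‖a n‖ ^ 2) := by
      rw [← ENNReal.tsum_mul_left]
      refine tsum_congr fun n => ?_
      rw [← ENNReal.ofReal_mul (inv_nonneg.mpr pi_nonneg), inv_mul_cancel_left₀ pi_ne_zero]

theorem fockKernel_eq_tsum_pow_mul (q : ℍ) :
    fockKernel q = fun p => ∑' n : ℕ, p ^ n * ((n ! : ℝ)⁻¹ • star q ^ n) := by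
  funext p
  simp only [fockKernel, mul_smul_comm]

theorem norm_fockKernel_coeff (q : ℍ) (n : ℕ) :
    ‖(n ! : ℝ)⁻¹ • star q ^ n‖ = ‖q‖ ^ n / n ! := by
  rw [norm_smul, norm_pow, norm_star, norm_inv, Real.norm_natCast, inv_mul_eq_div]

theorem summable_norm_fockKernel_coeff_mul_pow (q : ℍ) (r : ℝ) :
    Summable fun n : ℕ => ‖(n ! : ℝ)⁻¹ • star q ^ n‖ * r ^ n := by
  simpa only [norm_fockKernel_coeff, div_mul_eq_mul_div, ← mul_pow] using
    summable_pow_div_factorial (‖q‖ * r)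

theorem fockNormSq_fockKernel (q : ℍ) {I : ℍ} (hI : I ∈ quatSphere) :
    fockNormSq I (fockKernel q) = ∑' n : ℕ, ENNReal.ofReal (‖q‖ ^ (2 * n) / (n ! : ℝ)) := by
  rw [fockKernel_eq_tsum_pow_mul,
    fockNormSq_tsum_pow_mul hI (summable_norm_fockKernel_coeff_mul_pow q)]
  refine tsum_congr fun n => ?_
  rw [norm_fockKernel_coeff, pow_mul']
  field_simp

theorem tsum_ofReal_pow_div_factorial {x : ℝ} (hx : 0 ≤ x) :
    ∑' n : ℕ, ENNReal.ofReal (x ^ n / n !) = ENNReal.ofReal (Real.exp x) := by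
  rw [← ENNReal.ofReal_tsum_of_nonneg (fun n => by positivity) (summable_pow_div_factorial x),
    Real.exp_eq_exp_ℝ, NormedSpace.exp_eq_tsum_div]

theorem fockKernel_mem_fockSpace (q : ℍ) (I : ℍ) (hI : I ∈ quatSphere) :
    fockNormSq I (fockKernel q) = ∑' n : ℕ, ENNReal.ofReal (‖q‖ ^ (2 * n) / (n ! : ℝ)) ∧
      (∑' n : ℕ, ENNReal.ofReal (‖q‖ ^ (2 * n) / (n ! : ℝ))) =
        ENNReal.ofReal (Real.exp (‖q‖ ^ 2)) ∧
      fockNormSq I (fockKernel q) < ⊤ := by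
  have norm_eq_tsum := fockNormSq_fockKernel q hI
  have tsum_eq_exp : ∑' n : ℕ, ENNReal.ofReal (‖q‖ ^ (2 * n) / (n ! : ℝ)) =
      ENNReal.ofReal (Real.exp (‖q‖ ^ 2)) := by
    simpa only [pow_mul] using tsum_ofReal_pow_div_factorial (sq_nonneg ‖q‖)
  exact ⟨norm_eq_tsum, tsum_eq_exp, norm_eq_tsum ▸ tsum_eq_exp ▸ ENNReal.ofReal_lt_top⟩
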